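/- Let f : X → Y be a fully closed continuous surjection of a compact Hausdorff space X onto a metrizable compact space Y with metrizable fibers f⁻¹(y), y ∈ Y. Let K be a finite subset of a countable set A ⊆ Y, let h ∈ Z_A and let c > 1. Then there exists p ∈ C(X) such that ‖p − h‖_∞ ≤ c · sup{Ω_f(h)(y) : y ∈ A∖K} and Ω_f(p)(y) = 0 for every y ∈ Y∖K (that is, p ∈ Z_K). -/

import Mathlib

open Set Metric Topology Filter

/-- A continuous map of compacts is fully closed if images of disjoint closed sets
have finite intersection. -/
def FullyClosed {X Y : Type*} [TopologicalSpace X] [TopologicalSpace Y] (f : X → Y) : Prop :=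
  ∀ A B : Set X, IsClosed A → IsClosed B → Disjoint A B → (f '' A ∩ f '' B).Finite

/-- The fiberwise oscillation `Ω_f(h)(y) = diam (h '' (f⁻¹ {y}))`. -/
noncomputable def fiberOsc {X Y : Type*} [TopologicalSpace X]
    (f : X → Y) (h : C(X, ℝ)) (y : Y) : ℝ :=
  Metric.diam (h '' (f ⁻¹' {y}))

/-!
Collapse every fiber of `f` over a point outside `K`, and let `q : X → Z` be the quotient map; the
functions in `Z_K` are those of the form `g ∘ q` with `g ∈ C(Z)`. Full closedness of `f` makes the
collapsing relation closed, so `q` is a closed map and `Z` is compact and normal. On each fiber of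
`q` the function `h` oscillates by at most `s = sup {Ω_f(h)(y) : y ∈ A \ K}`, so the midpoint of its
range there approximates `h` within any `r > s / 2` on that fiber and, since `q` is closed, on all
nearby fibers. A partition of unity on `Z` glues these local constants into the required `g`.
-/

section ClosedMap

variable {X Z : Type*} [TopologicalSpace X] [TopologicalSpace Z]

theorem isClosedMap_quotient_mk [CompactSpace X] (S : Setoid X)
    (hS : IsClosed {p : X × X | S p.1 p.2}) : IsClosedMap (Quotient.mk S) := by
  intro F hF
  have hq : IsQuotientMap (Quotient.mk S) := isQuotientMap_quot_mk
  have saturation_eq : Quotient.mk S ⁻¹' (Quotient.mk S '' F) =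
      Prod.snd '' ({p : X × X | S p.1 p.2} ∩ Prod.fst ⁻¹' F) := by
    ext x
    constructor
    · rintro ⟨y, hy, hyx⟩
      exact ⟨(y, x), ⟨Quotient.exact hyx, hy⟩, rfl⟩
    · rintro ⟨⟨y, _⟩, ⟨hyx, hy⟩, rfl⟩
      exact ⟨y, hy, Quotient.sound hyx⟩
  rw [← hq.isClosed_preimage, saturation_eq]
  exact isClosedMap_snd_of_compactSpace _ (hS.inter (hF.preimage continuous_fst))

theorem normalSpace_of_isClosedMap [NormalSpace X] {q : X → Z} (hq : Continuous q)
    (hsurj : Function.Surjective q) (hclosed : IsClosedMap q) : NormalSpace Z where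
  normal s t hs ht hst := by
    obtain ⟨U, V, hU, hV, hsU, htV, hUV⟩ :=
      normal_separation (hs.preimage hq) (ht.preimage hq) (hst.preimage q)
    refine ⟨kernImage q U, kernImage q V, isClosedMap_iff_kernImage.1 hclosed hU,
      isClosedMap_iff_kernImage.1 hclosed hV, subset_kernImage_iff.2 hsU,
      subset_kernImage_iff.2 htV, Set.disjoint_left.2 fun z hzU hzV => ?_⟩
    obtain ⟨x, rfl⟩ := hsurj z
    exact Set.disjoint_left.1 hUV (hzU rfl) (hzV rfl)

end ClosedMap

section Oscillation

theorem exists_subset_closedBall_half_diam {s : Set ℝ} (hs : Bornology.IsBounded s) :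
    ∃ m, s ⊆ closedBall m (diam s / 2) := by
  refine ⟨(sInf s + sSup s) / 2, ?_⟩
  rw [Real.diam_eq hs, ← Real.Icc_eq_closedBall]
  exact hs.subset_Icc_sInf_sSup

variable {X Y : Type*} [TopologicalSpace X]

theorem fiberOsc_nonneg (f : X → Y) (h : C(X, ℝ)) (y : Y) : 0 ≤ fiberOsc f h y :=
  diam_nonneg

theorem fiberOsc_eq_zero_of_forall_eq {f : X → Y} {h : C(X, ℝ)} {y : Y}
    (hy : ∀ a b, f a = y → f b = y → h a = h b) : fiberOsc f h y = 0 := by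
  refine diam_subsingleton ?_
  rintro _ ⟨a, ha, rfl⟩ _ ⟨b, hb, rfl⟩
  exact hy a b ha hb

theorem sSup_fiberOsc_image_nonneg (f : X → Y) (h : C(X, ℝ)) (s : Set Y) :
    0 ≤ sSup (fiberOsc f h '' s) :=
  Real.sSup_nonneg (forall_mem_image.2 fun y _ => fiberOsc_nonneg f h y)

variable [CompactSpace X]

theorem isBounded_image_continuousMap (h : C(X, ℝ)) (s : Set X) : Bornology.IsBounded (h '' s) :=
  (isCompact_range h.continuous).isBounded.subset (image_subset_range h s)

theorem dist_le_fiberOsc {f : X → Y} (h : C(X, ℝ)) {a b : X} (hab : f a = f b) :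
    dist (h a) (h b) ≤ fiberOsc f h (f b) :=
  dist_le_diam_of_mem (isBounded_image_continuousMap h _) (mem_image_of_mem h hab)
    (mem_image_of_mem h rfl)

theorem bddAbove_fiberOsc_image (f : X → Y) (h : C(X, ℝ)) (s : Set Y) :
    BddAbove (fiberOsc f h '' s) := by
  refine ⟨diam (range h), ?_⟩
  rintro _ ⟨y, -, rfl⟩
  exact diam_mono (image_subset_range _ _) (isCompact_range h.continuous).isBounded

theorem fiberOsc_le_sSup_image_sdiff {f : X → Y} {h : C(X, ℝ)} {A K : Set Y}
    (hA : ∀ y ∉ A, fiberOsc f h y = 0) {y : Y} (hy : y ∉ K) :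
    fiberOsc f h y ≤ sSup (fiberOsc f h '' (A \ K)) := by
  by_cases hyA : y ∈ A
  · exact le_csSup (bddAbove_fiberOsc_image f h _) (mem_image_of_mem _ ⟨hyA, hy⟩)
  · exact (hA y hyA).trans_le (sSup_fiberOsc_image_nonneg f h _)

theorem exists_continuousMap_dist_comp_lt [TopologicalSpace Y] [NormalSpace Y] [ParacompactSpace Y]
    {q : X → Y} (hq : IsClosedMap q) (h : C(X, ℝ)) {r : ℝ} (hr : ∀ y, fiberOsc q h y < 2 * r) :
    ∃ g : C(Y, ℝ), ∀ x, dist (g (q x)) (h x) < r := by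
  let t (y : Y) : Set ℝ := ⋂ x ∈ q ⁻¹' {y}, ball (h x) r
  have convex_t (y : Y) : Convex ℝ (t y) := convex_iInter₂ fun x _ => convex_ball (h x) r
  have exists_local_const (y : Y) : ∃ m, ∀ᶠ y' in 𝓝 y, m ∈ t y' := by
    obtain ⟨m, hm⟩ := exists_subset_closedBall_half_diam
      (isBounded_image_continuousMap h (q ⁻¹' {y}))
    have dist_lt_on_fiber : ∀ x ∈ q ⁻¹' {y}, dist m (h x) < r := fun x hx =>
      calc dist m (h x) ≤ fiberOsc q h y / 2 := mem_closedBall'.1 (hm (mem_image_of_mem h hx))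
        _ < r := by linarith [hr y]
    have dist_lt_near_fiber : ∀ᶠ y' in 𝓝 y, ∀ x ∈ q ⁻¹' {y'}, dist m (h x) < r :=
      hq.eventually_nhds_fiber y fun x hx =>
        (continuous_const.dist h.continuous).continuousAt.eventually_lt continuousAt_const
          (dist_lt_on_fiber x hx)
    exact ⟨m, dist_lt_near_fiber.mono fun y' hy' => mem_iInter₂.2 hy'⟩
  obtain ⟨g, hg⟩ := exists_continuous_forall_mem_convex_of_local_const convex_t exists_local_const
  exact ⟨g, fun x => mem_iInter₂.1 (hg (q x)) x rfl⟩

end Oscillation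

section Collapse

variable {X Y : Type*}

/-- The equivalence relation on `X` whose classes are the fibers of `f` over the points outside `K`
and the single points of the other fibers. Continuous functions on its quotient correspond to the
functions in `Z_K`. -/
def collapseSetoid (f : X → Y) (K : Set Y) : Setoid X where
  r a b := a = b ∨ (f a = f b ∧ f a ∉ K)
  iseqv := ⟨fun _ => Or.inl rfl, by grind, by grind⟩

variable [TopologicalSpace X]

theorem fiberOsc_collapseSetoid_mk_le [CompactSpace X] {f : X → Y} {K : Set Y} {h : C(X, ℝ)}
    {s : ℝ} (hs : 0 ≤ s) (hosc : ∀ y ∉ K, fiberOsc f h y ≤ s)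
    (z : Quotient (collapseSetoid f K)) : fiberOsc (Quotient.mk (collapseSetoid f K)) h z ≤ s := by
  refine diam_le_of_forall_dist_le hs ?_
  rintro _ ⟨a, rfl, rfl⟩ _ ⟨b, hba, rfl⟩
  rcases Quotient.exact hba with rfl | ⟨hfba, hb⟩
  · rwa [dist_self]
  · rw [dist_comm]
    exact (dist_le_fiberOsc h hfba).trans (hosc _ (hfba ▸ hb))

theorem fiberOsc_comp_collapseSetoid_mk {f : X → Y} {K : Set Y}
    (g : C(Quotient (collapseSetoid f K), ℝ)) {y : Y} (hy : y ∉ K) :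
    fiberOsc f (g.comp ⟨Quotient.mk (collapseSetoid f K), continuous_quot_mk⟩) y = 0 := by
  refine fiberOsc_eq_zero_of_forall_eq fun a b ha hb => congrArg g (Quotient.sound ?_)
  exact Or.inr ⟨ha.trans hb.symm, ha.symm ▸ hy⟩

variable [TopologicalSpace Y]

theorem FullyClosed.isClosed_collapseSetoid [T25Space X] [T1Space Y] {f : X → Y}
    (hfc : FullyClosed f) (hf : Continuous f) (K : Set Y) :
    IsClosed {p : X × X | collapseSetoid f K p.1 p.2} := by
  rw [← isOpen_compl_iff, isOpen_iff_mem_nhds]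
  rintro ⟨a, b⟩ hab
  have hne : a ≠ b := fun h => hab (Or.inl h)
  obtain ⟨U, haU, hU, V, hbV, hV, hUV⟩ := exists_open_nhds_disjoint_closure hne
  -- Full closedness confines the related pairs in `U ×ˢ V` to finitely many fibers, those over `F`.
  let F : Set Y := (f '' closure U ∩ f '' closure V) \ K
  have hF : F.Finite := (hfc _ _ isClosed_closure isClosed_closure hUV).subset sdiff_subset
  have isClosed_pairs : IsClosed (⋃ y ∈ F, (f ⁻¹' {y}) ×ˢ (f ⁻¹' {y})) :=
    hF.isClosed_biUnion fun y _ =>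
      (isClosed_singleton.preimage hf).prod (isClosed_singleton.preimage hf)
  have hab_notMem : (a, b) ∉ ⋃ y ∈ F, (f ⁻¹' {y}) ×ˢ (f ⁻¹' {y}) := by
    simp only [mem_iUnion₂, not_exists]
    rintro y hy ⟨rfl, hba⟩
    exact hab (Or.inr ⟨hba.symm, hy.2⟩)
  filter_upwards [(hU.prod hV).mem_nhds ⟨haU, hbV⟩, isClosed_pairs.isOpen_compl.mem_nhds hab_notMem]
  rintro ⟨u, v⟩ ⟨huU, hvV⟩ huv (huv_eq | ⟨hfuv, hK⟩)
  · obtain rfl : u = v := huv_eq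
    exact Set.disjoint_left.1 hUV (subset_closure huU) (subset_closure hvV)
  · exact huv <| mem_iUnion₂.2 ⟨f u,
      ⟨⟨⟨u, subset_closure huU, rfl⟩, ⟨v, subset_closure hvV, hfuv.symm⟩⟩, hK⟩, rfl, hfuv.symm⟩

variable [CompactSpace X] [T2Space X] [T1Space Y]

theorem FullyClosed.exists_norm_sub_le {f : X → Y} (hfc : FullyClosed f) (hf : Continuous f)
    {K : Set Y} {h : C(X, ℝ)} {s r : ℝ} (hs : 0 ≤ s) (hosc : ∀ y ∉ K, fiberOsc f h y ≤ s)
    (hsr : s < 2 * r) : ∃ p : C(X, ℝ), ‖p - h‖ ≤ r ∧ ∀ y ∉ K, fiberOsc f p y = 0 := by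
  have hclosed : IsClosedMap (Quotient.mk (collapseSetoid f K)) :=
    isClosedMap_quotient_mk _ (hfc.isClosed_collapseSetoid hf K)
  have : NormalSpace (Quotient (collapseSetoid f K)) :=
    normalSpace_of_isClosedMap continuous_quot_mk Quotient.mk_surjective hclosed
  obtain ⟨g, hg⟩ := exists_continuousMap_dist_comp_lt hclosed h fun z =>
    (fiberOsc_collapseSetoid_mk_le hs hosc z).trans_lt hsr
  refine ⟨g.comp ⟨Quotient.mk _, continuous_quot_mk⟩, ?_,
    fun y hy => fiberOsc_comp_collapseSetoid_mk g hy⟩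
  rw [← dist_eq_norm, ContinuousMap.dist_le (by linarith)]
  exact fun x => (hg x).le

theorem exists_approx_in_ZK_general {f : X → Y} (hf : Continuous f) (hfc : FullyClosed f)
    {A : Set Y} (K : Set Y) {h : C(X, ℝ)} (hh : ∀ y ∉ A, fiberOsc f h y = 0)
    {c : ℝ} (hc : 1 / 2 < c) :
    ∃ p : C(X, ℝ),
      ‖p - h‖ ≤ c * sSup (fiberOsc f h '' (A \ K)) ∧
      ∀ y ∉ K, fiberOsc f p y = 0 := by
  have hosc : ∀ y ∉ K, fiberOsc f h y ≤ sSup (fiberOsc f h '' (A \ K)) :=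
    fun y hy => fiberOsc_le_sSup_image_sdiff hh hy
  have hs := sSup_fiberOsc_image_nonneg f h (A \ K)
  rcases hs.eq_or_lt with hs₀ | hs₀
  · exact ⟨h, by simp [← hs₀],
      fun y hy => ((hosc y hy).trans_eq hs₀.symm).antisymm (fiberOsc_nonneg f h y)⟩
  · exact hfc.exists_norm_sub_le hf hs hosc (by nlinarith)

end Collapse

/-- for a finite subset `K` of a countable set `A ⊆ Y`, `h ∈ Z_A` and
`c > 1`, there is `p ∈ Z_K` with `‖p - h‖ ≤ c · sup {Ω_f(h)(y) : y ∈ A \ K}`. -/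
theorem exists_approx_in_ZK
    {X Y : Type*} [TopologicalSpace X] [CompactSpace X] [T2Space X]
    [TopologicalSpace Y] [CompactSpace Y] [T2Space Y] [TopologicalSpace.MetrizableSpace Y]
    (f : X → Y) (hf : Continuous f) (hsurj : Function.Surjective f)
    (hfc : FullyClosed f)
    (hfib : ∀ y : Y, TopologicalSpace.MetrizableSpace (f ⁻¹' {y}))
    (A : Set Y) (hA : A.Countable) (K : Set Y) (hK : K.Finite) (hKA : K ⊆ A)
    (h : C(X, ℝ)) (hh : ∀ y ∉ A, fiberOsc f h y = 0)
    (c : ℝ) (hc : 1 < c) :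
    ∃ p : C(X, ℝ),
      ‖p - h‖ ≤ c * sSup (fiberOsc f h '' (A \ K)) ∧
      ∀ y ∉ K, fiberOsc f p y = 0 :=
  exists_approx_in_ZK_general hf hfc K hh (by linarith)
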